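/- Let D = ∪_{h=1}^H D_h where D_h = {x ∈ ℝⁿ : D_h x − d_h ∈ Q_h}, with D_h ∈ ℝ^{m_h×n}, d_h ∈ ℝ^{m_h}, and Q_h ⊆ ℝ^{m_h} a proper cone. For each h let F_h = {(α, β) ∈ ℝⁿ × ℝ : ∃ u_h ∈ Q_h* with α = D_hᵀu_h and β ≤ d_hᵀu_h}, and let F = ∩_{h=1}^H F_h. Then: (i) F ⊆ D°; (ii) if D_h ≠ ∅ for every h, then D° = ∩_{h=1}^H cl F_h; (iii) if for every h there exists x_h with D_h x_h − d_h ∈ int Q_h and every D_h has full column rank, then F = D°. -/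

import Mathlib

open Matrix

/-- A proper cone: closed, convex, closed under nonnegative scaling,
pointed (`K ∩ (−K) = {0}`), with nonempty interior. -/
def IsProperCone {n : ℕ} (K : Set (Fin n → ℝ)) : Prop :=
  IsClosed K ∧ Convex ℝ K ∧ (∀ x ∈ K, ∀ t : ℝ, 0 ≤ t → t • x ∈ K) ∧
    K ∩ (-K) = {0} ∧ (interior K).Nonempty

/-- The dual cone `K* = {u : uᵀx ≥ 0 for all x ∈ K}`. -/
def dualCone' {n : ℕ} (K : Set (Fin n → ℝ)) : Set (Fin n → ℝ) :=
  {u | ∀ x ∈ K, 0 ≤ u ⬝ᵥ x}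
/-- Pairs `(α, β)` obtained by Farkas aggregation from `D_h x − d_h ∈ Q_h`. -/
def farkasPairs {n mh : ℕ} (Dh : Matrix (Fin mh) (Fin n) ℝ) (dh : Fin mh → ℝ)
    (Qh : Set (Fin mh → ℝ)) : Set ((Fin n → ℝ) × ℝ) :=
  {p | ∃ u ∈ dualCone' Qh, p.1 = Dhᵀ.mulVec u ∧ p.2 ≤ dh ⬝ᵥ u}

/-- The set `X°` of valid inequalities for `X`. -/
def validIneqs {n : ℕ} (X : Set (Fin n → ℝ)) : Set ((Fin n → ℝ) × ℝ) :=
  {p | ∀ x ∈ X, p.2 ≤ p.1 ⬝ᵥ x}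

/-!
Stack `(α, β)` into `ℝⁿ × ℝ`, paired by `⟨(α, β), (y, τ)⟩ = αᵀy - βτ`. The cone dual to the Farkas
pairs of `Ax - b ∈ K` is the homogenization `{(y, τ) : τ ≥ 0, Ay - τb ∈ K}`. A valid inequality is
nonnegative on its elements of height `τ > 0`, which rescale to feasible points; these are dense as
soon as one feasible point exists, so the valid inequality lies in the bidual of the Farkas pairs,
which is their closure. When `Ax - b` is interior to `K`, the multiplier `u` satisfies
`ε ‖u‖ ≤ uᵀ(Ax - b) ≤ αᵀx - β`, so multipliers of convergent Farkas pairs subconverge and no closure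
is needed.
-/

section DotProduct

lemma dotProduct_mulVec_sub {R m n : Type*} [CommRing R] [Fintype m] [Fintype n]
    (u : m → R) (A : Matrix m n R) (x : n → R) (b : m → R) :
    u ⬝ᵥ (A *ᵥ x - b) = Aᵀ *ᵥ u ⬝ᵥ x - b ⬝ᵥ u := by
  rw [dotProduct_sub, dotProduct_mulVec, mulVec_transpose, dotProduct_comm u b]

lemma exists_forall_eq_dotProduct {R n : Type*} [CommSemiring R] [Fintype n]
    (f : (n → R) →ₗ[R] R) : ∃ y : n → R, ∀ x, f x = x ⬝ᵥ y := by
  classical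
  obtain ⟨y, rfl⟩ := (dotProductEquiv R n).surjective f
  exact ⟨y, fun x => dotProduct_comm y x⟩

lemma exists_forall_eq_dotProduct_sub_mul {R n : Type*} [CommRing R] [Fintype n]
    (f : ((n → R) × R) →ₗ[R] R) :
    ∃ q : (n → R) × R, ∀ p, f p = p.1 ⬝ᵥ q.1 - p.2 * q.2 := by
  obtain ⟨y, hy⟩ := exists_forall_eq_dotProduct (f ∘ₗ LinearMap.inl R (n → R) R)
  refine ⟨(y, -f (0, 1)), fun p => ?_⟩
  have hp : p = (p.1, 0) + p.2 • ((0, 1) : (n → R) × R) := by ext <;> simp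
  calc f p = f (p.1, 0) + p.2 * f (0, 1) := by
        conv_lhs => rw [hp]
        rw [map_add, map_smul, smul_eq_mul]
    _ = p.1 ⬝ᵥ y - p.2 * -f (0, 1) := by
        rw [← hy p.1, mul_neg, sub_neg_eq_add, LinearMap.comp_apply, LinearMap.inl_apply]

end DotProduct

section ProperCone

/-- An `IsProperCone` set as a `ProperCone` of Mathlib, a closed convex cone containing `0`
that need neither be pointed nor have interior points. -/
def IsProperCone.toProperCone {n : ℕ} {K : Set (Fin n → ℝ)} (hK : IsProperCone K) :
    ProperCone ℝ (Fin n → ℝ) where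
  carrier := K
  zero_mem' := Set.inter_subset_left (hK.2.2.2.1.symm ▸ Set.mem_singleton 0 : 0 ∈ K ∩ -K)
  add_mem' {x y} hx hy := by
    have hmid : (1 / 2 : ℝ) • x + (1 / 2 : ℝ) • y ∈ K :=
      hK.2.1 hx hy (by norm_num) (by norm_num) (by norm_num)
    have hdouble := hK.2.2.1 _ hmid 2 zero_le_two
    rwa [smul_add, smul_smul, smul_smul, mul_one_div_cancel two_ne_zero, one_smul,
      one_smul] at hdouble
  smul_mem' t _ hx := hK.2.2.1 _ hx t t.2
  isClosed' := hK.1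

lemma mem_of_forall_dualCone'_dotProduct_nonneg {n : ℕ} (K : ProperCone ℝ (Fin n → ℝ))
    {x : Fin n → ℝ} (hx : ∀ u ∈ dualCone' K, 0 ≤ u ⬝ᵥ x) : x ∈ K := by
  by_contra hxK
  obtain ⟨f, hfK, hfx⟩ := K.hyperplane_separation_point hxK
  obtain ⟨u, hu⟩ := exists_forall_eq_dotProduct f.toLinearMap
  have hf (z) : f z = u ⬝ᵥ z := (hu z).trans (dotProduct_comm z u)
  exact (hx u fun z hz => hf z ▸ hfK z hz).not_gt (hf x ▸ hfx)

lemma isClosed_dualCone' {n : ℕ} (K : Set (Fin n → ℝ)) : IsClosed (dualCone' K) := by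
  simp only [dualCone', Set.ofPred_forall]
  exact isClosed_biInter fun x _ =>
    isClosed_le continuous_const (continuous_id.dotProduct continuous_const)

lemma exists_pos_forall_mul_norm_le_dotProduct {n : ℕ} {K : Set (Fin n → ℝ)} {s : Fin n → ℝ}
    (hs : s ∈ interior K) : ∃ ε > 0, ∀ u ∈ dualCone' K, ε * ‖u‖ ≤ u ⬝ᵥ s := by
  obtain ⟨ε, hε, hball⟩ :=
    Metric.nhds_basis_closedBall.mem_iff.1 (mem_interior_iff_mem_nhds.1 hs)
  refine ⟨ε, hε, fun u hu => ?_⟩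
  rw [mul_comm, ← le_div_iff₀ hε,
    pi_norm_le_iff_of_nonneg (div_nonneg (hu s (interior_subset hs)) hε.le)]
  intro i
  have hmem : s - Pi.single i (ε * SignType.sign (u i)) ∈ K := by
    refine hball ?_
    have hsign : |(SignType.sign (u i) : ℝ)| ≤ 1 := by
      cases SignType.sign (u i) <;> simp
    rw [mem_closedBall_iff_norm, sub_sub_cancel_left, norm_neg, Pi.norm_single, norm_mul,
      Real.norm_of_nonneg hε.le, Real.norm_eq_abs]
    exact mul_le_of_le_one_right hε.le hsign
  have hnonneg := hu _ hmem
  rw [dotProduct_sub, dotProduct_single, mul_left_comm, self_mul_sign] at hnonneg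
  rw [le_div_iff₀ hε, Real.norm_eq_abs]
  linarith

end ProperCone

section ValidIneqs

lemma validIneqs_iUnion {n : ℕ} {ι : Sort*} (X : ι → Set (Fin n → ℝ)) :
    validIneqs (⋃ i, X i) = ⋂ i, validIneqs (X i) := by
  ext p
  simp only [validIneqs, Set.mem_iUnion, Set.mem_iInter, Set.mem_ofPred_eq, forall_exists_index]
  exact forall_comm

lemma isClosed_validIneqs {n : ℕ} (X : Set (Fin n → ℝ)) : IsClosed (validIneqs X) := by
  simp only [validIneqs, Set.ofPred_forall]
  exact isClosed_biInter fun x _ =>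
    isClosed_le continuous_snd (continuous_fst.dotProduct continuous_const)

end ValidIneqs

section FarkasPairs

variable {n m : ℕ} (A : Matrix (Fin m) (Fin n) ℝ) (b : Fin m → ℝ)

lemma farkasPairs_subset_validIneqs (K : Set (Fin m → ℝ)) :
    farkasPairs A b K ⊆ validIneqs {x | A *ᵥ x - b ∈ K} := by
  rintro ⟨_, β⟩ ⟨u, hu, rfl, hβ⟩ x hx
  have hux := hu _ hx
  rw [dotProduct_mulVec_sub] at hux
  exact hβ.trans (sub_nonneg.1 hux)

/-- The Farkas pairs as a convex cone, which makes separation from their closure available. -/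
def farkasCone (K : Set (Fin m → ℝ)) : PointedCone ℝ ((Fin n → ℝ) × ℝ) where
  carrier := farkasPairs A b K
  zero_mem' := ⟨0, fun x _ => by simp, by simp, by simp⟩
  add_mem' := by
    rintro p q ⟨u, hu, hpu, hbu⟩ ⟨v, hv, hqv, hbv⟩
    refine ⟨u + v, fun x hx => ?_, ?_, ?_⟩
    · rw [add_dotProduct]
      exact add_nonneg (hu x hx) (hv x hx)
    · rw [Prod.fst_add, hpu, hqv, mulVec_add]
    · rw [Prod.snd_add, dotProduct_add]
      exact add_le_add hbu hbv
  smul_mem' := by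
    rintro ⟨t, ht⟩ p ⟨u, hu, hpu, hbu⟩
    refine ⟨t • u, fun x hx => ?_, ?_, ?_⟩
    · rw [smul_dotProduct]
      exact smul_nonneg ht (hu x hx)
    · rw [Prod.smul_fst, hpu, mulVec_smul, Nonneg.mk_smul]
    · rw [Prod.smul_snd, dotProduct_smul, Nonneg.mk_smul]
      exact smul_le_smul_of_nonneg_left hbu ht

/-- The homogenization `{(y, τ) : τ ≥ 0, Ay - τb ∈ K}` of the conic system `Ax - b ∈ K`: its
elements of height `τ = 1` are the solutions, those of height `0` the recession directions. -/
def homogenization (K : PointedCone ℝ (Fin m → ℝ)) : PointedCone ℝ ((Fin n → ℝ) × ℝ) where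
  carrier := {q | 0 ≤ q.2 ∧ A *ᵥ q.1 - q.2 • b ∈ K}
  zero_mem' := by simp
  add_mem' := by
    rintro p q ⟨hp, hpK⟩ ⟨hq, hqK⟩
    refine ⟨add_nonneg hp hq, ?_⟩
    rw [Prod.fst_add, Prod.snd_add, mulVec_add, add_smul, add_sub_add_comm]
    exact K.add_mem hpK hqK
  smul_mem' := by
    rintro ⟨t, ht⟩ q ⟨hq, hqK⟩
    refine ⟨smul_nonneg ht hq, ?_⟩
    rw [Nonneg.mk_smul, Prod.smul_fst, Prod.smul_snd, mulVec_smul, smul_assoc, ← smul_sub]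
    exact K.smul_mem ht hqK

variable {A b}

lemma mem_homogenization_of_forall_farkasPairs {K : ProperCone ℝ (Fin m → ℝ)}
    {q : (Fin n → ℝ) × ℝ} (hq : ∀ p ∈ farkasPairs A b K, 0 ≤ p.1 ⬝ᵥ q.1 - p.2 * q.2) :
    q ∈ homogenization A b K := by
  constructor
  · have hmem : ((0, -1) : (Fin n → ℝ) × ℝ) ∈ farkasPairs A b K :=
      ⟨0, fun x _ => by simp, by simp, by simp⟩
    simpa using hq _ hmem
  · refine mem_of_forall_dualCone'_dotProduct_nonneg K fun u hu => ?_
    rw [dotProduct_mulVec_sub, smul_dotProduct, smul_eq_mul, mul_comm]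
    exact hq (Aᵀ *ᵥ u, b ⬝ᵥ u) ⟨u, hu, rfl, le_rfl⟩

lemma mul_le_dotProduct_of_mem_homogenization_of_pos {K : PointedCone ℝ (Fin m → ℝ)}
    {p q : (Fin n → ℝ) × ℝ} (hp : p ∈ validIneqs {x | A *ᵥ x - b ∈ K})
    (hq : q ∈ homogenization A b K) (hpos : 0 < q.2) : p.2 * q.2 ≤ p.1 ⬝ᵥ q.1 := by
  have hfeas : A *ᵥ (q.2⁻¹ • q.1) - b ∈ K := by
    have h := K.smul_mem (inv_nonneg.2 hpos.le) hq.2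
    rwa [smul_sub, inv_smul_smul₀ hpos.ne', ← mulVec_smul] at h
  have hle := hp _ hfeas
  rwa [dotProduct_smul, smul_eq_mul, ← div_eq_inv_mul, le_div_iff₀ hpos] at hle

lemma mul_le_dotProduct_of_mem_homogenization {K : PointedCone ℝ (Fin m → ℝ)}
    {p q : (Fin n → ℝ) × ℝ} (hne : {x | A *ᵥ x - b ∈ K}.Nonempty)
    (hp : p ∈ validIneqs {x | A *ᵥ x - b ∈ K}) (hq : q ∈ homogenization A b K) :
    p.2 * q.2 ≤ p.1 ⬝ᵥ q.1 := by
  obtain ⟨x, hx⟩ := hne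
  have hx_mem : (x, 1) ∈ homogenization A b K := ⟨zero_le_one, by rwa [one_smul]⟩
  have hperturb : ∀ ε > (0 : ℝ), p.2 * (q.2 + ε * 1) ≤ p.1 ⬝ᵥ (q.1 + ε • x) := fun ε hε =>
    mul_le_dotProduct_of_mem_homogenization_of_pos hp
      (add_mem hq ((homogenization A b K).smul_mem hε.le hx_mem))
      (add_pos_of_nonneg_of_pos hq.1 (mul_pos hε one_pos))
  have hlim := ContinuousWithinAt.closure_le (s := Set.Ioi (0 : ℝ)) (x := 0)
    (by simp) (by fun_prop) (by fun_prop) hperturb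
  simpa using hlim

theorem validIneqs_eq_closure_farkasPairs (K : ProperCone ℝ (Fin m → ℝ))
    (hne : {x | A *ᵥ x - b ∈ K}.Nonempty) :
    validIneqs {x | A *ᵥ x - b ∈ K} = closure (farkasPairs A b K) := by
  refine Set.Subset.antisymm (fun p hp => ?_)
    (closure_minimal (farkasPairs_subset_validIneqs A b K) (isClosed_validIneqs _))
  by_contra hpF
  obtain ⟨f, hf_nonneg, hf_neg⟩ :=
    ProperCone.hyperplane_separation_point (Submodule.closure (farkasCone A b K)) hpF
  obtain ⟨q, hfq⟩ := exists_forall_eq_dotProduct_sub_mul f.toLinearMap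
  have hq : q ∈ homogenization A b K := mem_homogenization_of_forall_farkasPairs fun r hr =>
    hfq r ▸ hf_nonneg r (subset_closure hr)
  have hpq : p.1 ⬝ᵥ q.1 - p.2 * q.2 < 0 := hfq p ▸ hf_neg
  exact hpq.not_ge (sub_nonneg.2 (mul_le_dotProduct_of_mem_homogenization hne hp hq))

end FarkasPairs

section Closedness

lemma isClosed_image_fst_of_norm_le {X Y : Type*} [TopologicalSpace X] [SequentialSpace X]
    [SeminormedAddCommGroup Y] [ProperSpace Y] {G : Set (X × Y)} (hG : IsClosed G) {g : X → ℝ}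
    (hg : Continuous g) (hle : ∀ p ∈ G, ‖p.2‖ ≤ g p.1) : IsClosed (Prod.fst '' G) := by
  refine IsSeqClosed.isClosed fun s x hs hsx => ?_
  choose p hpG hps using hs
  obtain rfl : (fun k => (p k).1) = s := funext hps
  obtain ⟨M, hM⟩ := ((hg.tendsto x).comp hsx).bddAbove_range
  have hball (k) : (p k).2 ∈ Metric.closedBall 0 M :=
    mem_closedBall_zero_iff.2 ((hle _ (hpG k)).trans (hM ⟨k, rfl⟩))
  obtain ⟨y, -, φ, hφ, hy⟩ := (isCompact_closedBall 0 M).tendsto_subseq hball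
  have hlim := (hsx.comp hφ.tendsto_atTop).prodMk_nhds hy
  exact ⟨(x, y), hG.mem_of_tendsto hlim (.of_forall fun k => hpG (φ k)), rfl⟩

theorem isClosed_farkasPairs {n m : ℕ} {A : Matrix (Fin m) (Fin n) ℝ} {b : Fin m → ℝ}
    {K : Set (Fin m → ℝ)} {x : Fin n → ℝ} (hx : A *ᵥ x - b ∈ interior K) :
    IsClosed (farkasPairs A b K) := by
  obtain ⟨ε, hε, hbound⟩ := exists_pos_forall_mul_norm_le_dotProduct hx
  let G : Set (((Fin n → ℝ) × ℝ) × (Fin m → ℝ)) :=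
    {r | r.2 ∈ dualCone' K ∧ r.1.1 = Aᵀ *ᵥ r.2 ∧ r.1.2 ≤ b ⬝ᵥ r.2}
  have himage : farkasPairs A b K = Prod.fst '' G := by
    ext p
    exact ⟨fun ⟨u, hu⟩ => ⟨(p, u), hu, rfl⟩, fun ⟨⟨_, u⟩, hu, hp⟩ => hp ▸ ⟨u, hu⟩⟩
  have hG : IsClosed G :=
    ((isClosed_dualCone' K).preimage continuous_snd).inter <|
      (isClosed_eq (continuous_fst.comp continuous_fst) (by fun_prop)).inter
        (isClosed_le (continuous_snd.comp continuous_fst) (by fun_prop))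
  rw [himage]
  refine isClosed_image_fst_of_norm_le hG (g := fun p => (p.1 ⬝ᵥ x - p.2) / ε) (by fun_prop) ?_
  rintro ⟨⟨α, β⟩, u⟩ ⟨hu, (hα : α = Aᵀ *ᵥ u), hβ⟩
  rw [le_div_iff₀' hε]
  calc ε * ‖u‖ ≤ u ⬝ᵥ (A *ᵥ x - b) := hbound u hu
    _ = α ⬝ᵥ x - b ⬝ᵥ u := by rw [dotProduct_mulVec_sub, hα]
    _ ≤ α ⬝ᵥ x - β := sub_le_sub_left hβ _

end Closedness

theorem farkasPairs_eq_validIneqs {n m : ℕ} {A : Matrix (Fin m) (Fin n) ℝ} {b : Fin m → ℝ}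
    (K : ProperCone ℝ (Fin m → ℝ)) {x : Fin n → ℝ}
    (hx : A *ᵥ x - b ∈ interior (K : Set (Fin m → ℝ))) :
    farkasPairs A b K = validIneqs {x | A *ᵥ x - b ∈ K} := by
  rw [validIneqs_eq_closure_farkasPairs K ⟨x, (interior_subset hx :)⟩,
    (isClosed_farkasPairs hx).closure_eq]

theorem cut_stmt_6_general {n : ℕ} {ι : Sort*} (m : ι → ℕ)
    (D : ∀ h, Matrix (Fin (m h)) (Fin n) ℝ) (d : ∀ h, Fin (m h) → ℝ)
    (Q : ∀ h, ProperCone ℝ (Fin (m h) → ℝ)) :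
    ((⋂ h, farkasPairs (D h) (d h) (Q h)) ⊆
        validIneqs (⋃ h, {x | D h *ᵥ x - d h ∈ Q h})) ∧
    ((∀ h, {x | D h *ᵥ x - d h ∈ Q h}.Nonempty) →
      validIneqs (⋃ h, {x | D h *ᵥ x - d h ∈ Q h}) =
        ⋂ h, closure (farkasPairs (D h) (d h) (Q h))) ∧
    ((∀ h, ∃ x, D h *ᵥ x - d h ∈ interior (Q h : Set (Fin (m h) → ℝ))) →
      (⋂ h, farkasPairs (D h) (d h) (Q h)) =
        validIneqs (⋃ h, {x | D h *ᵥ x - d h ∈ Q h})) := by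
  rw [validIneqs_iUnion]
  refine ⟨Set.iInter_mono fun h => farkasPairs_subset_validIneqs (D h) (d h) (Q h),
    fun hne => Set.iInter_congr fun h => validIneqs_eq_closure_farkasPairs (Q h) (hne h),
    fun hint => Set.iInter_congr fun h => ?_⟩
  obtain ⟨x, hx⟩ := hint h
  exact farkasPairs_eq_validIneqs (Q h) hx

/-- Disjunctive inequalities: (i) `F ⊆ D°`; (ii) if each term is nonempty then
`D° = ∩_h cl F_h`; (iii) if each term is strongly feasible and each `D_h` has
full column rank then `F = D°`. -/
theorem cut_stmt_6 {n H : ℕ} (m : Fin H → ℕ)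
    (D : ∀ h : Fin H, Matrix (Fin (m h)) (Fin n) ℝ) (d : ∀ h : Fin H, Fin (m h) → ℝ)
    (Q : ∀ h : Fin H, Set (Fin (m h) → ℝ)) (hQ : ∀ h, IsProperCone (Q h)) :
    ((⋂ h : Fin H, farkasPairs (D h) (d h) (Q h)) ⊆
        validIneqs (⋃ h : Fin H, {x : Fin n → ℝ | (D h).mulVec x - d h ∈ Q h})) ∧
    ((∀ h : Fin H, {x : Fin n → ℝ | (D h).mulVec x - d h ∈ Q h}.Nonempty) →
      validIneqs (⋃ h : Fin H, {x : Fin n → ℝ | (D h).mulVec x - d h ∈ Q h}) =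
        ⋂ h : Fin H, closure (farkasPairs (D h) (d h) (Q h))) ∧
    ((∀ h : Fin H, ∃ x : Fin n → ℝ, (D h).mulVec x - d h ∈ interior (Q h)) →
      (∀ h : Fin H, LinearIndependent ℝ (D h)ᵀ) →
      (⋂ h : Fin H, farkasPairs (D h) (d h) (Q h)) =
        validIneqs (⋃ h : Fin H, {x : Fin n → ℝ | (D h).mulVec x - d h ∈ Q h})) := by
  obtain ⟨hsub, hclosure, heq⟩ := cut_stmt_6_general m D d fun h => (hQ h).toProperCone
  exact ⟨hsub, hclosure, fun hint _ => heq hint⟩
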